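/- arXiv:2303.07672 — 2 statements merged into one kernel-verified Lean document; each statement's English description precedes it below -/
import Mathlib

section
/- Let p be a prime, let k be a perfect field of characteristic p, and let A be a commutative k-algebra of characteristic p that is étale over k (formally étale and finitely presented). Then A is a perfect ring, i.e. the p-power map x ↦ x^p on A is bijective. -/
universe u

/-- Every étale algebra of characteristic `p` over a perfect field `k` of characteristic
`p` is a perfect ring. -/
theorem stmt_8 (p : ℕ) [Fact p.Prime] (k : Type u) [Field k] [CharP k p]
    (hk : Function.Bijective fun x : k => x ^ p)
    (A : Type u) [CommRing A] [CharP A p] [Algebra k A] (hA : Algebra.Etale k A) :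
    Function.Bijective fun a : A => a ^ p := by
  obtain ⟨I, _, Ai, _, _, e, h⟩ := (Algebra.Etale.iff_exists_algEquiv_prod k A).1 hA
  have hkp : ExpChar k p := ExpChar.prime Fact.out
  have : PerfectRing k p := PerfectRing.ofSurjective k p hk.2
  have : PerfectField k := PerfectRing.toPerfectField k p
  have key : ∀ i, Function.Bijective fun a : Ai i => a ^ p := by
    intro i
    have := (h i).1
    have : PerfectField (Ai i) := Algebra.IsAlgebraic.perfectField (K := k)
    have : ExpChar (Ai i) p := expChar_of_injective_algebraMap (algebraMap k (Ai i)).injective p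
    exact bijective_frobenius (Ai i) p
  constructor
  · intro a b hab
    apply e.injective
    funext i
    apply (key i).1
    have := congrFun (congrArg e hab) i
    simpa using this
  · intro b
    choose c hc using fun i => (key i).2 (e b i)
    refine ⟨e.symm c, e.injective ?_⟩
    funext i
    simpa using hc i
end

section
/- Let p be a prime, let R be a commutative ring of characteristic p, and let A be an étale R-algebra (formally étale and finitely presented). Let A^{(p)} denote the base change A ⊗_R R_φ, where R_φ is R regarded as an R-algebra via the Frobenius endomorphism φ : R → R, x ↦ x^p. Then the relative Frobenius map A^{(p)} → A, determined by a ⊗ r ↦ r · a^p (where r acts on A through the structure map R → A), is bijective; in particular it is an isomorphism. -/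
universe u

/-- `Rfrob R` is `R` regarded as an algebra over itself via the Frobenius endomorphism. -/
def Rfrob (R : Type u) : Type u := R

instance (R : Type u) [CommRing R] : CommRing (Rfrob R) := inferInstanceAs (CommRing R)

/-- The `R`-algebra structure on `Rfrob R` given by the Frobenius `x ↦ x ^ p`. -/
noncomputable def Rfrob.algebra (p : ℕ) [Fact p.Prime] (R : Type u) [CommRing R]
    [CharP R p] : Algebra R (Rfrob R) :=
  letI : ExpChar R p := ExpChar.prime Fact.out
  ((frobenius R p : R →+* R) : R →+* Rfrob R).toAlgebra

open TensorProduct in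
theorem aux_add_pow {B : Type*} [CommRing B] {p : ℕ} (hp : p.Prime) (h : (p : B) = 0) (x y : B) :
    (x + y) ^ p = x ^ p + y ^ p := by
  obtain ⟨r, hr⟩ := exists_add_pow_prime_eq hp x y
  rw [hr, h]; ring

open TensorProduct in
theorem aux_bij {B A : Type u} [CommRing B] [CommRing A] [Algebra B A] [Algebra.Etale B A]
    {p : ℕ} (hp : p.Prime) (h : (p : B) = 0) (G : A →+* B)
    (h1 : ∀ b, G (algebraMap B A b) = b ^ p) (h2 : ∀ a, algebraMap B A (G a) = a ^ p) :
    Function.Bijective (algebraMap B A) := by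
  have hAA : (p : A ⊗[B] A) = 0 := by
    have := congrArg (algebraMap B (A ⊗[B] A)) h
    simpa using this
  have hflat : Module.Flat B A := inferInstance
  have hff : Module.FaithfullyFlat B A := by
    refine Module.FaithfullyFlat.of_comap_surjective fun P ↦ ⟨PrimeSpectrum.comap G P, ?_⟩
    ext b
    simp only [PrimeSpectrum.comap_asIdeal, Ideal.mem_comap, h1]
    exact P.2.pow_mem_iff_mem p hp.pos
  obtain ⟨e, he, hsp⟩ : ∃ e, IsIdempotentElem e ∧ KaehlerDifferential.ideal B A = A ⊗[B] A ∙ e :=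
    (Ideal.isIdempotentElem_iff_of_fg _ (KaehlerDifferential.ideal_fg B A)).mp <|
      (Ideal.cotangent_subsingleton_iff _).mp
        (inferInstanceAs <| Subsingleton (Ω[A⁄B]))
  have hnil : KaehlerDifferential.ideal B A ≤ nilradical (A ⊗[B] A) := by
    rw [← KaehlerDifferential.span_range_eq_ideal, Ideal.span_le]
    rintro _ ⟨a, rfl⟩
    refine ⟨p, ?_⟩
    have h3 := aux_add_pow hp hAA ((1 : A) ⊗ₜ[B] a - a ⊗ₜ[B] (1 : A)) (a ⊗ₜ[B] (1 : A))
    have h4 : (1 : A) ⊗ₜ[B] (a ^ p) = (a ^ p) ⊗ₜ[B] (1 : A) := by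
      rw [← h2, Algebra.algebraMap_eq_smul_one, TensorProduct.tmul_smul, TensorProduct.smul_tmul']
    rw [sub_add_cancel, Algebra.TensorProduct.tmul_pow, Algebra.TensorProduct.tmul_pow,
      one_pow, h4] at h3
    simpa using h3
  have he0 : e = 0 := by
    have : e ∈ nilradical (A ⊗[B] A) := hnil (hsp ▸ Ideal.mem_span_singleton_self e)
    obtain ⟨n, hn⟩ := this
    rw [← he.pow_succ_eq n, pow_succ, hn, zero_mul]
  have hker : ∀ x : A ⊗[B] A, Algebra.TensorProduct.lmul' B x = 0 → x = 0 := by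
    intro x hx
    have : x ∈ KaehlerDifferential.ideal B A := hx
    rw [hsp, he0] at this
    simpa using this
  refine Module.FaithfullyFlat.bijective_of_tensorProduct (S := A) ⟨?_, ?_⟩
  · intro x y hxy
    simpa using congrArg (Algebra.TensorProduct.lmul' (S := A) B) hxy
  · intro x
    refine ⟨Algebra.TensorProduct.lmul' B x, ?_⟩
    rw [← sub_eq_zero]
    apply hker
    simp

open TensorProduct in
theorem aux_etale {R S A A' : Type u} [CommRing R] [CommRing S] [CommRing A] [CommRing A']
    [Algebra R S] [Algebra R A] [Algebra S A'] [Algebra.Etale R A] [Algebra.Etale S A']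
    (fr : A →+* A') (hfr : ∀ r, fr (algebraMap R A r) = algebraMap S A' (algebraMap R S r)) :
    ∃ F : (A ⊗[R] S) →+* A', (∀ a s, F (a ⊗ₜ s) = algebraMap S A' s * fr a) ∧
      ∀ (_ : Algebra (A ⊗[R] S) A'), algebraMap (A ⊗[R] S) A' = F →
        Algebra.Etale (A ⊗[R] S) A' := by
  letI : Algebra R A' := ((algebraMap S A').comp (algebraMap R S)).toAlgebra
  haveI : IsScalarTower R S A' := .of_algebraMap_eq fun _ ↦ rfl
  let f : A →ₐ[R] A' := { fr with commutes' := hfr }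
  have hF : ∀ a s, (Algebra.TensorProduct.productMap f (IsScalarTower.toAlgHom R S A')) (a ⊗ₜ s)
      = algebraMap S A' s * fr a := fun a s ↦ by
    simp [Algebra.TensorProduct.productMap_apply_tmul, mul_comm, f]
  refine ⟨(Algebra.TensorProduct.productMap f (IsScalarTower.toAlgHom R S A')).toRingHom, hF, ?_⟩
  intro inst hinst
  letI : Algebra S (A ⊗[R] S) := Algebra.TensorProduct.rightAlgebra
  haveI : IsScalarTower S (A ⊗[R] S) A' := .of_algebraMap_eq fun s ↦ by
    rw [hinst]
    change _ = (Algebra.TensorProduct.productMap f (IsScalarTower.toAlgHom R S A')) (1 ⊗ₜ s)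
    simp [hF]
  have hc : ∀ s : S, (Algebra.TensorProduct.comm R S A).toRingEquiv
      (algebraMap S (S ⊗[R] A) s) = algebraMap S (A ⊗[R] S) s := by
    intro s
    change Algebra.TensorProduct.comm R S A (s ⊗ₜ 1) = 1 ⊗ₜ s
    simp
  have : Algebra.Etale S (A ⊗[R] S) :=
    Algebra.Etale.of_equiv (A := S ⊗[R] A) (AlgEquiv.ofRingEquiv hc)
  exact Algebra.Etale.of_restrictScalars S _ _

open TensorProduct in
/-- If `R` has characteristic `p` and `A` is an étale `R`-algebra, then the relative
Frobenius map `A ⊗[R] Rfrob R → A`, determined by `a ⊗ r ↦ algebraMap R A r * a ^ p`,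
is bijective (in particular, an isomorphism of rings). -/
theorem stmt_9 (p : ℕ) [Fact p.Prime] (R : Type u) [CommRing R] [CharP R p]
    (A : Type u) [CommRing A] [Algebra R A] (hA : Algebra.Etale R A) :
    letI : Algebra R (Rfrob R) := Rfrob.algebra p R
    ∃ F : (A ⊗[R] Rfrob R) →+* A,
      (∀ (a : A) (r : R), F (a ⊗ₜ[R] (r : Rfrob R)) = algebraMap R A r * a ^ p) ∧
      Function.Bijective F ∧
      ∀ G : (A ⊗[R] Rfrob R) →+* A,
        (∀ (a : A) (r : R), G (a ⊗ₜ[R] (r : Rfrob R)) = algebraMap R A r * a ^ p) → G = F := by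
  letI : Algebra R (Rfrob R) := Rfrob.algebra p R
  have hp : p.Prime := Fact.out
  letI iA : Algebra (Rfrob R) A := inferInstanceAs (Algebra R A)
  haveI : Algebra.Etale (Rfrob R) A := hA
  have hpR : (p : R) = 0 := CharP.cast_eq_zero R p
  have hpA : (p : A) = 0 := by rw [← map_natCast (algebraMap R A), hpR, map_zero]
  have hpB : (p : A ⊗[R] Rfrob R) = 0 := by
    rw [← map_natCast (algebraMap R (A ⊗[R] Rfrob R)), hpR, map_zero]
  let fr : A →+* A :=
    { toFun := fun a ↦ a ^ p
      map_one' := one_pow p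
      map_mul' := fun a b ↦ mul_pow a b p
      map_zero' := zero_pow hp.ne_zero
      map_add' := aux_add_pow hp hpA }
  obtain ⟨F, hF, het⟩ := aux_etale (R := R) (S := Rfrob R) (A := A) (A' := A) fr (fun r ↦ by
    change (algebraMap R A r) ^ p = algebraMap R A (r ^ p)
    rw [map_pow])
  have hF' : ∀ (a : A) (r : R), F (a ⊗ₜ[R] (r : Rfrob R)) = algebraMap R A r * a ^ p := hF
  refine ⟨F, hF', ?_, ?_⟩
  · letI : Algebra (A ⊗[R] Rfrob R) A := F.toAlgebra
    haveI := het _ rfl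
    have key : ∀ r : R, (algebraMap R A r) ⊗ₜ[R] (1 : Rfrob R) =
        (1 : A) ⊗ₜ[R] ((show Rfrob R from r) ^ p) := by
      intro r
      rw [Algebra.algebraMap_eq_smul_one, TensorProduct.smul_tmul,
        ← Algebra.algebraMap_eq_smul_one]
      rfl
    have key2 : ∀ (a : A) (r : R),
        (algebraMap R A r) ⊗ₜ[R] (1 : Rfrob R) * (a ⊗ₜ[R] (1 : Rfrob R)) ^ p =
        (a ⊗ₜ[R] (show Rfrob R from r)) ^ p := by
      intro a r
      rw [key, Algebra.TensorProduct.tmul_pow, Algebra.TensorProduct.tmul_pow,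
        Algebra.TensorProduct.tmul_mul_tmul, one_pow, one_mul, mul_one]
    refine aux_bij hp hpB (Algebra.TensorProduct.includeLeftRingHom) ?_ ?_
    · intro b
      change Algebra.TensorProduct.includeLeftRingHom (F b) = b ^ p
      induction b using TensorProduct.induction_on with
      | zero => simp [hp.ne_zero]
      | add x y hx hy => rw [map_add, map_add, hx, hy, aux_add_pow hp hpB]
      | tmul a r =>
        rw [hF' a r, map_mul, map_pow]
        exact key2 a r
    · intro a
      change F (a ⊗ₜ[R] (1 : Rfrob R)) = a ^ p
      rw [hF, map_one, one_mul]
      rfl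
  · intro G hG
    refine RingHom.ext fun x ↦ ?_
    induction x using TensorProduct.induction_on with
    | zero => simp
    | add x y hx hy => rw [map_add, map_add, hx, hy]
    | tmul a r => rw [hF' a r, hG a r]
end
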